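/- Interpolation derivative along a corridor: fix x > 0 and a subset C ⊆ B of bonds, and for t ∈ [0,1] set x_b(t) = x√t for b ∈ C and x_b(t) = x for b ∉ C; let P(t) denote the quenched pressure with parameters {x_b(t)}. Then for every t ∈ (0,1], P is differentiable at t with d P(t)/dt = (x²/2) Σ_{b∈C} [⟨S_b⟩_t + 1]_t, where the subscript t indicates that both the Gaussian means and the Gibbs weights are evaluated at parameters {x_b(t)}. -/

import Mathlib

open MeasureTheory ProbabilityTheory Filter

noncomputable section

/-- The real value ±1 of a Boolean spin. -/
def spin (s : Bool) : ℝ := if s then 1 else -1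

/-- The bond spin `S_b = S_n S_{n'}` for a bond `b` with endpoints `ep b = (n, n')`. -/
def bondSpin {V ι : Type*} (ep : ι → V × V) (S : V → Bool) (b : ι) : ℝ :=
  spin (S (ep b).1) * spin (S (ep b).2)

/-- The potential `U(j, S) = Σ_b x_b j_b S_b`. -/
def potential {V ι : Type*} [Fintype ι] (ep : ι → V × V) (x j : ι → ℝ)
    (S : V → Bool) : ℝ :=
  ∑ b, x b * j b * bondSpin ep S b

/-- The partition function `Z(j) = Σ_S exp U(j,S)`. -/
def partitionFn {V ι : Type*} [Fintype V] [DecidableEq V] [Fintype ι]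
    (ep : ι → V × V) (x j : ι → ℝ) : ℝ :=
  ∑ S : V → Bool, Real.exp (potential ep x j S)

/-- The Boltzmann–Gibbs expectation `⟨f⟩` at fixed disorder `j`. -/
def gibbs {V ι : Type*} [Fintype V] [DecidableEq V] [Fintype ι]
    (ep : ι → V × V) (x j : ι → ℝ) (f : (V → Bool) → ℝ) : ℝ :=
  (∑ S : V → Bool, f S * Real.exp (potential ep x j S)) / partitionFn ep x j

/-- The law of the couplings: independent Gaussians, `j_b` of mean `x_b` and variance 1. -/
def couplings {ι : Type*} [Fintype ι] (x : ι → ℝ) : Measure (ι → ℝ) :=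
  Measure.pi fun b => gaussianReal (x b) 1

/-- The quenched average `[F]`. -/
def quenched {ι : Type*} [Fintype ι] (x : ι → ℝ) (F : (ι → ℝ) → ℝ) : ℝ :=
  ∫ j, F j ∂(couplings x)

/-- The quenched pressure `P({x}) = [ln Z]`. -/
def pressure {V ι : Type*} [Fintype V] [DecidableEq V] [Fintype ι]
    (ep : ι → V × V) (x : ι → ℝ) : ℝ :=
  quenched x fun j => Real.log (partitionFn ep x j)

/-! The pressure at parameters `u` is `∫ ln Z(u, u + g) dγ(g)` with `γ` the standard Gaussian law,
so differentiating under the integral sign in the direction of bond `b` produces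
`[(u_b + j_b) ⟨S_b⟩] = u_b [⟨S_b⟩] + [j_b ⟨S_b⟩]`.  On the Nishimori line `[j_b ⟨S_b⟩] = u_b`: the
law of the couplings with means `S_b u_b` is the exponential tilting of `γ` by `U(·, S)`, so Gibbs
averages are posterior averages of a planted configuration `S`, and gauge invariance removes the
dependence on the planted `S`.  Thus `∂P/∂u_b = u_b [⟨S_b⟩ + 1]`, and the chain rule along
`u_b(t) = x √t` for `b ∈ C` gives the factor `x² / 2`. -/

section GeneralLemmas

theorem measure_pi_tilted {ι : Type*} [Fintype ι] {X : ι → Type*} [∀ i, MeasurableSpace (X i)]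
    (μ : ∀ i, Measure (X i)) [∀ i, SigmaFinite (μ i)] (f : ∀ i, X i → ℝ) :
    Measure.pi (fun i => (μ i).tilted (f i)) = (Measure.pi μ).tilted fun x => ∑ i, f i (x i) := by
  refine Measure.pi_eq fun s hs => ?_
  have prod_density (x : ∀ i, X i) :
      Real.exp (∑ i, f i (x i)) / ∫ y, Real.exp (∑ i, f i (y i)) ∂Measure.pi μ
        = ∏ i, Real.exp (f i (x i)) / ∫ y, Real.exp (f i y) ∂μ i := by
    simp only [Real.exp_sum, Finset.prod_div_distrib]
    rw [integral_fintype_prod_eq_prod fun i y => Real.exp (f i y)]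
  rw [tilted_apply_eq_ofReal_integral' _ (MeasurableSet.univ_pi hs)]
  simp only [prod_density, Measure.restrict_pi_pi]
  rw [integral_fintype_prod_eq_prod fun i y => Real.exp (f i y) / ∫ y, Real.exp (f i y) ∂μ i,
    ENNReal.ofReal_prod_of_nonneg fun i _ => by positivity]
  exact Finset.prod_congr rfl fun i _ => (tilted_apply_eq_ofReal_integral' _ (hs i)).symm

theorem gaussianReal_tilted_const_mul (m t : ℝ) {v : NNReal} (hv : v ≠ 0) :
    (gaussianReal m v).tilted (fun y => t * y) = gaussianReal (m + v * t) v := by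
  have hmgf : ∫ y, Real.exp (t * y) ∂gaussianReal m v = Real.exp (m * t + v * t ^ 2 / 2) :=
    congrFun mgf_fun_id_gaussianReal t
  have hv' : (v : ℝ) ≠ 0 := NNReal.coe_ne_zero.2 hv
  rw [Measure.tilted, hmgf, gaussianReal_of_var_ne_zero _ hv, gaussianReal_of_var_ne_zero _ hv,
    ← withDensity_mul _ (measurable_gaussianPDF m v) (by fun_prop)]
  congr 1 with y
  rw [Pi.mul_apply, gaussianPDF, gaussianPDF, ← ENNReal.ofReal_mul (gaussianPDFReal_nonneg m v y),
    gaussianPDFReal, gaussianPDFReal, ← Real.exp_sub, mul_assoc, ← Real.exp_add]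
  congr 3
  field_simp
  ring

theorem abs_log_sum_exp_le {α : Type*} {s : Finset α} (hs : s.Nonempty) {f : α → ℝ} {M : ℝ}
    (hf : ∀ a ∈ s, |f a| ≤ M) :
    |Real.log (∑ a ∈ s, Real.exp (f a))| ≤ Real.log s.card + M := by
  have card_pos : (0 : ℝ) < s.card := Nat.cast_pos.2 hs.card_pos
  have log_card_nonneg : 0 ≤ Real.log s.card := Real.log_natCast_nonneg _
  have upper : ∑ a ∈ s, Real.exp (f a) ≤ s.card * Real.exp M := by
    rw [← nsmul_eq_mul]
    exact Finset.sum_le_card_nsmul _ _ _ fun a ha => Real.exp_le_exp.2 (abs_le.1 (hf a ha)).2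
  have lower : s.card * Real.exp (-M) ≤ ∑ a ∈ s, Real.exp (f a) := by
    rw [← nsmul_eq_mul]
    exact Finset.card_nsmul_le_sum _ _ _ fun a ha => Real.exp_le_exp.2 (abs_le.1 (hf a ha)).1
  have log_upper := Real.log_le_log (Finset.sum_pos (fun a _ => Real.exp_pos _) hs) upper
  have log_lower := Real.log_le_log (by positivity) lower
  rw [Real.log_mul card_pos.ne' (Real.exp_ne_zero _), Real.log_exp] at log_upper log_lower
  exact abs_le.2 ⟨by linarith, log_upper⟩

end GeneralLemmas

section Couplings

variable {ι : Type*} [Fintype ι]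

instance (u : ι → ℝ) : IsProbabilityMeasure (couplings u) := by
  unfold couplings; infer_instance

theorem couplings_tilted_sum_mul (u a : ι → ℝ) :
    (couplings u).tilted (fun j => ∑ b, a b * j b) = couplings (u + a) := by
  rw [couplings, ← measure_pi_tilted (fun b => gaussianReal (u b) 1) fun b y => a b * y]
  simp [gaussianReal_tilted_const_mul, couplings]

theorem integrable_exp_sum_mul_couplings (u a : ι → ℝ) :
    Integrable (fun j => Real.exp (∑ b, a b * j b)) (couplings u) := by
  simp only [Real.exp_sum]
  exact Integrable.fintype_prod fun b => integrable_exp_mul_gaussianReal (a b)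

theorem integral_exp_sum_mul_couplings (u a : ι → ℝ) :
    ∫ j, Real.exp (∑ b, a b * j b) ∂couplings u = Real.exp (∑ b, (u b * a b + a b ^ 2 / 2)) := by
  simp only [Real.exp_sum, couplings]
  rw [integral_fintype_prod_eq_prod fun b y => Real.exp (a b * y)]
  refine Finset.prod_congr rfl fun b _ => ?_
  simpa [mgf] using congrFun (mgf_fun_id_gaussianReal (μ := u b) (v := 1)) (a b)

theorem integrable_eval_couplings (u : ι → ℝ) (b : ι) :
    Integrable (fun j => j b) (couplings u) :=
  integrable_comp_eval (f := id) (μ := fun b => gaussianReal (u b) 1)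
    ((memLp_id_gaussianReal 1).integrable le_rfl)

theorem quenched_eval (u : ι → ℝ) (b : ι) : quenched u (fun j => j b) = u b :=
  (integral_comp_eval (f := id) (μ := fun b => gaussianReal (u b) 1)
    aestronglyMeasurable_id).trans integral_id_gaussianReal

theorem measurePreserving_const_add_couplings (u a : ι → ℝ) :
    MeasurePreserving (a + ·) (couplings u) (couplings (u + a)) :=
  measurePreserving_pi _ _ fun b =>
    ⟨measurable_const_add (a b), gaussianReal_map_const_add (a b)⟩

theorem quenched_eq_quenched_zero_const_add (u : ι → ℝ) (F : (ι → ℝ) → ℝ) :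
    quenched u F = quenched 0 fun g => F (u + g) := by
  have h := measurePreserving_const_add_couplings 0 u
  rw [zero_add] at h
  exact (h.integral_comp (measurableEmbedding_addLeft u) F).symm

theorem measurePreserving_const_mul_couplings (u : ι → ℝ) {σ : ι → ℝ} (hσ : σ * σ = 1) :
    MeasurePreserving (σ * ·) (couplings u) (couplings (σ * u)) := by
  have variance_eq (b : ι) : NNReal.mk (σ b ^ 2) (sq_nonneg _) * 1 = 1 := by
    ext
    simpa [sq] using congrFun hσ b
  refine measurePreserving_pi _ _ fun b => ⟨measurable_const_mul (σ b), ?_⟩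
  exact (gaussianReal_map_const_mul (σ b)).trans (by rw [variance_eq, Pi.mul_apply])

theorem quenched_const_mul (u : ι → ℝ) {σ : ι → ℝ} (hσ : σ * σ = 1) (F : (ι → ℝ) → ℝ) :
    quenched (σ * u) F = quenched u fun j => F (σ * j) := by
  have involutive : Function.Involutive (σ * · : (ι → ℝ) → ι → ℝ) := fun j => by
    simp only [← mul_assoc, hσ, one_mul]
  exact ((measurePreserving_const_mul_couplings u hσ).integral_comp
    (MeasurableEquiv.ofInvolutive _ involutive (measurable_const_mul σ)).measurableEmbedding F).symm

end Couplings

section Gauge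

variable {V ι : Type*}

theorem spin_beq (s s' : Bool) : spin (s == s') = spin s * spin s' := by
  cases s <;> cases s' <;> simp [spin]

theorem spin_mul_self (s : Bool) : spin s * spin s = 1 := by
  cases s <;> simp [spin]

theorem bondSpin_mul_self (ep : ι → V × V) (S : V → Bool) :
    bondSpin ep S * bondSpin ep S = 1 := by
  ext b
  simp [bondSpin, mul_mul_mul_comm, spin_mul_self]

theorem abs_bondSpin (ep : ι → V × V) (S : V → Bool) (b : ι) : |bondSpin ep S b| = 1 := by
  rcases mul_self_eq_one_iff.1 (congrFun (bondSpin_mul_self ep S) b) with h | h <;> simp [h]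

/-- The gauge transformation by `S`, i.e. sitewise multiplication of `±1` spins by `S`, which for
Boolean spins is `==`. -/
def gaugeTransform (S : V → Bool) : Equiv.Perm (V → Bool) :=
  Function.Involutive.toPerm (fun S' v => S v == S' v) fun S' => by
    funext v
    change (S v == (S v == S' v)) = S' v
    cases S v <;> cases S' v <;> rfl

theorem gaugeTransform_apply (S S' : V → Bool) (v : V) : gaugeTransform S S' v = (S v == S' v) :=
  rfl

theorem bondSpin_gaugeTransform (ep : ι → V × V) (S S' : V → Bool) :
    bondSpin ep (gaugeTransform S S') = bondSpin ep S * bondSpin ep S' := by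
  ext b
  simp only [bondSpin, gaugeTransform_apply, spin_beq, Pi.mul_apply]
  ring

variable [Fintype ι]

theorem potential_bondSpin_mul_gaugeTransform (ep : ι → V × V) (u j : ι → ℝ) (S S' : V → Bool) :
    potential ep u (bondSpin ep S * j) (gaugeTransform S S') = potential ep u j S' := by
  refine Finset.sum_congr rfl fun b _ => ?_
  have h : bondSpin ep S b * bondSpin ep S b = 1 := congrFun (bondSpin_mul_self ep S) b
  rw [bondSpin_gaugeTransform, Pi.mul_apply, Pi.mul_apply]
  linear_combination u b * j b * bondSpin ep S' b * h

variable [Fintype V] [DecidableEq V]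

theorem partitionFn_bondSpin_mul (ep : ι → V × V) (u j : ι → ℝ) (S : V → Bool) :
    partitionFn ep u (bondSpin ep S * j) = partitionFn ep u j := by
  simp only [partitionFn]
  rw [← Equiv.sum_comp (gaugeTransform S)]
  simp only [potential_bondSpin_mul_gaugeTransform]

theorem gibbs_bondSpin_mul (ep : ι → V × V) (u j : ι → ℝ) (S : V → Bool) (f : (V → Bool) → ℝ) :
    gibbs ep u (bondSpin ep S * j) f = gibbs ep u j fun S' => f (gaugeTransform S S') := by
  rw [gibbs, gibbs, partitionFn_bondSpin_mul, ← Equiv.sum_comp (gaugeTransform S)]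
  simp only [potential_bondSpin_mul_gaugeTransform]

end Gauge

section Gibbs

variable {V ι : Type*} [Fintype V] [DecidableEq V] [Fintype ι]

theorem partitionFn_pos (ep : ι → V × V) (u j : ι → ℝ) : 0 < partitionFn ep u j :=
  Finset.sum_pos (fun _ _ => Real.exp_pos _) Finset.univ_nonempty

theorem partitionFn_mul_gibbs (ep : ι → V × V) (u j : ι → ℝ) (f : (V → Bool) → ℝ) :
    partitionFn ep u j * gibbs ep u j f = ∑ S, f S * Real.exp (potential ep u j S) :=
  mul_div_cancel₀ _ (partitionFn_pos ep u j).ne'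

theorem gibbs_const_mul (ep : ι → V × V) (u j : ι → ℝ) (c : ℝ) (f : (V → Bool) → ℝ) :
    gibbs ep u j (fun S => c * f S) = c * gibbs ep u j f := by
  simp only [gibbs, mul_assoc, ← Finset.mul_sum, mul_div_assoc]

theorem gibbs_add_const (ep : ι → V × V) (u j : ι → ℝ) (f : (V → Bool) → ℝ) (c : ℝ) :
    gibbs ep u j (fun S => f S + c) = gibbs ep u j f + c := by
  rw [gibbs, div_eq_iff (partitionFn_pos ep u j).ne', mul_comm, mul_add, partitionFn_mul_gibbs]
  simp only [add_mul, Finset.sum_add_distrib, ← Finset.mul_sum]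
  rw [← partitionFn, mul_comm c]

theorem abs_gibbs_le (ep : ι → V × V) (u j : ι → ℝ) {f : (V → Bool) → ℝ} {c : ℝ}
    (hf : ∀ S, |f S| ≤ c) : |gibbs ep u j f| ≤ c := by
  rw [gibbs, abs_div, abs_of_pos (partitionFn_pos ep u j), div_le_iff₀ (partitionFn_pos ep u j),
    partitionFn, Finset.mul_sum]
  refine (Finset.abs_sum_le_sum_abs _ _).trans (Finset.sum_le_sum fun S _ => ?_)
  rw [abs_mul, Real.abs_exp]
  exact mul_le_mul_of_nonneg_right (hf S) (Real.exp_pos _).le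

theorem abs_gibbs_bondSpin_le_one (ep : ι → V × V) (u j : ι → ℝ) (b : ι) :
    |gibbs ep u j fun S => bondSpin ep S b| ≤ 1 :=
  abs_gibbs_le ep u j fun S => (abs_bondSpin ep S b).le

theorem abs_log_partitionFn_le (ep : ι → V × V) (u j : ι → ℝ) :
    |Real.log (partitionFn ep u j)| ≤
      Real.log (Fintype.card (V → Bool)) + ∑ b, |u b * j b| := by
  refine abs_log_sum_exp_le Finset.univ_nonempty fun S _ => ?_
  refine (Finset.abs_sum_le_sum_abs _ _).trans (Finset.sum_le_sum fun b _ => ?_)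
  rw [abs_mul, abs_bondSpin, mul_one]

theorem continuous_partitionFn (ep : ι → V × V) (u : ι → ℝ) : Continuous (partitionFn ep u) := by
  unfold partitionFn potential
  fun_prop

theorem continuous_log_partitionFn (ep : ι → V × V) (u : ι → ℝ) :
    Continuous fun j => Real.log (partitionFn ep u j) :=
  (continuous_partitionFn ep u).log fun j => (partitionFn_pos ep u j).ne'

theorem continuous_gibbs (ep : ι → V × V) (u : ι → ℝ) (f : (V → Bool) → ℝ) :
    Continuous fun j => gibbs ep u j f := by
  refine Continuous.div ?_ (continuous_partitionFn ep u) fun j => (partitionFn_pos ep u j).ne'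
  unfold potential
  fun_prop

theorem integrable_log_partitionFn (ep : ι → V × V) (u w : ι → ℝ) :
    Integrable (fun j => Real.log (partitionFn ep u j)) (couplings w) := by
  refine Integrable.mono' (g := fun j => Real.log (Fintype.card (V → Bool)) + ∑ b, |u b * j b|) ?_
    (continuous_log_partitionFn ep u).aestronglyMeasurable
    (ae_of_all _ fun j => abs_log_partitionFn_le ep u j)
  exact (integrable_const _).add <| integrable_finsetSum _ fun b _ =>
    ((integrable_eval_couplings w b).const_mul (u b)).abs

theorem integrable_mul_gibbs (ep : ι → V × V) (u : ι → ℝ) (f : (V → Bool) → ℝ) {w : ι → ℝ}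
    {F : (ι → ℝ) → ℝ} (hF : Integrable F (couplings w)) :
    Integrable (fun j => F j * gibbs ep u j f) (couplings w) :=
  hF.mul_bdd (c := ∑ S, |f S|) (continuous_gibbs ep u f).aestronglyMeasurable <|
    ae_of_all _ fun j => abs_gibbs_le ep u j fun S =>
      Finset.single_le_sum (f := fun S => |f S|) (fun _ _ => abs_nonneg _) (Finset.mem_univ S)

end Gibbs

section Nishimori

variable {V ι : Type*} [Fintype ι]

theorem potential_eq_sum_bondSpin_mul (ep : ι → V × V) (u j : ι → ℝ) (S : V → Bool) :
    potential ep u j S = ∑ b, (bondSpin ep S * u) b * j b :=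
  Finset.sum_congr rfl fun b _ => by rw [Pi.mul_apply]; ring

theorem couplings_zero_tilted_potential (ep : ι → V × V) (u : ι → ℝ) (S : V → Bool) :
    (couplings 0).tilted (fun j => potential ep u j S) = couplings (bondSpin ep S * u) := by
  simp only [potential_eq_sum_bondSpin_mul, couplings_tilted_sum_mul, zero_add]

theorem integrable_exp_potential (ep : ι → V × V) (u w : ι → ℝ) (S : V → Bool) :
    Integrable (fun j => Real.exp (potential ep u j S)) (couplings w) := by
  simp only [potential_eq_sum_bondSpin_mul, integrable_exp_sum_mul_couplings]

theorem integral_exp_potential (ep : ι → V × V) (u : ι → ℝ) (S : V → Bool) :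
    ∫ j, Real.exp (potential ep u j S) ∂couplings 0 = Real.exp (∑ b, u b ^ 2 / 2) := by
  simp only [potential_eq_sum_bondSpin_mul, integral_exp_sum_mul_couplings]
  refine congrArg Real.exp (Finset.sum_congr rfl fun b _ => ?_)
  have h : bondSpin ep S b * bondSpin ep S b = 1 := congrFun (bondSpin_mul_self ep S) b
  simp only [Pi.zero_apply, Pi.mul_apply]
  linear_combination u b ^ 2 / 2 * h

theorem quenched_bondSpin_mul (ep : ι → V × V) (u : ι → ℝ) (S : V → Bool) (F : (ι → ℝ) → ℝ) :
    quenched (bondSpin ep S * u) F = (Real.exp (∑ b, u b ^ 2 / 2))⁻¹ *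
      ∫ j, Real.exp (potential ep u j S) * F j ∂couplings 0 := by
  rw [quenched, ← couplings_zero_tilted_potential, integral_tilted, integral_exp_potential,
    ← integral_const_mul]
  simp only [smul_eq_mul, div_eq_inv_mul, mul_assoc]

variable [Fintype V] [DecidableEq V]

/- If `S` is planted uniformly and the couplings are drawn with means `S_b u_b`, then `gibbs ep u j`
is the posterior law of `S` given `j`. -/
theorem sum_quenched_mul_gibbs (ep : ι → V × V) (u : ι → ℝ) (f : (V → Bool) → ℝ)
    {F : (ι → ℝ) → ℝ} (hF : ∀ S, Integrable F (couplings (bondSpin ep S * u))) :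
    ∑ S, quenched (bondSpin ep S * u) (fun j => F j * gibbs ep u j f)
      = ∑ S, f S * quenched (bondSpin ep S * u) F := by
  have integrable_exp_mul {G : (ι → ℝ) → ℝ} {S : V → Bool}
      (hG : Integrable G (couplings (bondSpin ep S * u))) :
      Integrable (fun j => Real.exp (potential ep u j S) * G j) (couplings 0) := by
    rw [← couplings_zero_tilted_potential] at hG
    exact (integrable_tilted_iff (integrable_exp_potential ep u 0 S) G).1 hG
  simp only [quenched_bondSpin_mul, mul_left_comm (f _), ← Finset.mul_sum]
  simp only [← integral_const_mul (f _)]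
  rw [← integral_finsetSum _ fun S _ => integrable_exp_mul (integrable_mul_gibbs ep u f (hF S)),
    ← integral_finsetSum _ fun S _ => (integrable_exp_mul (hF S)).const_mul (f S)]
  congr 2 with j
  calc ∑ S, Real.exp (potential ep u j S) * (F j * gibbs ep u j f)
      = F j * (partitionFn ep u j * gibbs ep u j f) := by
        rw [← Finset.sum_mul, ← partitionFn, mul_left_comm]
    _ = ∑ S, f S * (Real.exp (potential ep u j S) * F j) := by
        rw [partitionFn_mul_gibbs, Finset.mul_sum]
        exact Finset.sum_congr rfl fun S _ => by ring

theorem quenched_eval_mul_gibbs_bondSpin_mul (ep : ι → V × V) (u : ι → ℝ) (S : V → Bool) (b : ι) :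
    quenched (bondSpin ep S * u) (fun j => j b * gibbs ep u j fun S' => bondSpin ep S' b)
      = quenched u fun j => j b * gibbs ep u j fun S' => bondSpin ep S' b := by
  have hb : bondSpin ep S b * bondSpin ep S b = 1 := congrFun (bondSpin_mul_self ep S) b
  rw [quenched_const_mul u (bondSpin_mul_self ep S)]
  simp only [gibbs_bondSpin_mul, bondSpin_gaugeTransform, Pi.mul_apply, gibbs_const_mul]
  congr 1 with j
  rw [mul_mul_mul_comm, hb, one_mul]

theorem nishimori_identity (ep : ι → V × V) (u : ι → ℝ) (b : ι) :
    quenched u (fun j => j b * gibbs ep u j fun S => bondSpin ep S b) = u b := by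
  have planted := sum_quenched_mul_gibbs ep u (fun S => bondSpin ep S b)
    fun S => integrable_eval_couplings (bondSpin ep S * u) b
  have planted_mean (S : V → Bool) : bondSpin ep S b * (bondSpin ep S * u) b = u b := by
    rw [Pi.mul_apply, ← mul_assoc, ← Pi.mul_apply, bondSpin_mul_self, Pi.one_apply, one_mul]
  simp only [quenched_eval_mul_gibbs_bondSpin_mul, quenched_eval, planted_mean, Finset.sum_const,
    nsmul_eq_mul] at planted
  exact mul_left_cancel₀ (Nat.cast_ne_zero.2 Finset.univ_nonempty.card_pos.ne') planted

theorem quenched_add_mul_gibbs (ep : ι → V × V) (u : ι → ℝ) (b : ι) :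
    quenched u (fun j => (u b + j b) * gibbs ep u j fun S => bondSpin ep S b)
      = u b * quenched u fun j => gibbs ep u j fun S => bondSpin ep S b + 1 := by
  have integrable_gibbs : Integrable (fun j => gibbs ep u j fun S => bondSpin ep S b)
      (couplings u) := by
    simpa only [one_mul] using integrable_mul_gibbs ep u _ (integrable_const 1)
  have nishimori := nishimori_identity ep u b
  simp only [quenched, gibbs_add_const, add_mul] at nishimori ⊢
  rw [integral_add (integrable_gibbs.const_mul _)
      (integrable_mul_gibbs ep u _ (integrable_eval_couplings u b)),
    integral_const_mul, nishimori, integral_add integrable_gibbs (integrable_const 1)]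
  simp [mul_add]

end Nishimori

section Gradient

variable {V ι : Type*} [Fintype ι]

theorem hasFDerivAt_potential_add (ep : ι → V × V) (g u : ι → ℝ) (S : V → Bool) :
    HasFDerivAt (fun u => potential ep u (u + g) S)
      (∑ b, ((2 * u b + g b) * bondSpin ep S b) •
        ContinuousLinearMap.proj (R := ℝ) (φ := fun _ => ℝ) b) u := by
  refine HasFDerivAt.fun_sum fun b _ => ?_
  have hb : HasFDerivAt (fun u : ι → ℝ => u b)
      (ContinuousLinearMap.proj (R := ℝ) (φ := fun _ => ℝ) b) u :=
    hasFDerivAt_apply b u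
  refine ((hb.mul (hb.add_const (g b))).mul_const (bondSpin ep S b)).congr_fderiv ?_
  ext h
  simp only [smul_add, add_apply, smul_apply, ContinuousLinearMap.proj_apply, smul_eq_mul]
  ring

variable [Fintype V] [DecidableEq V]

theorem hasFDerivAt_log_partitionFn_add (ep : ι → V × V) (g u : ι → ℝ) :
    HasFDerivAt (fun u => Real.log (partitionFn ep u (u + g)))
      (∑ b, ((2 * u b + g b) * gibbs ep u (u + g) fun S => bondSpin ep S b) •
        ContinuousLinearMap.proj (R := ℝ) (φ := fun _ => ℝ) b) u := by
  have hZ : HasFDerivAt (fun u => partitionFn ep u (u + g)) _ u :=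
    HasFDerivAt.fun_sum fun S _ => (hasFDerivAt_potential_add ep g u S).exp
  refine (hZ.log (partitionFn_pos ep u (u + g)).ne').congr_fderiv ?_
  simp only [Finset.smul_sum, smul_smul, gibbs]
  rw [Finset.sum_comm]
  refine Finset.sum_congr rfl fun b _ => ?_
  rw [← Finset.sum_smul]
  congr 1
  rw [div_eq_inv_mul, mul_left_comm, Finset.mul_sum, Finset.mul_sum]
  exact Finset.sum_congr rfl fun S _ => by ring

theorem norm_sum_gibbs_smul_proj_le (ep : ι → V × V) {u v : ι → ℝ} (g : ι → ℝ)
    (hv : v ∈ Metric.ball u 1) :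
    ‖∑ b, ((2 * v b + g b) * gibbs ep v (v + g) fun S => bondSpin ep S b) •
        ContinuousLinearMap.proj (R := ℝ) (φ := fun _ : ι => ℝ) b‖
      ≤ ∑ b, (2 * (|u b| + 1) + |g b|) *
        ‖ContinuousLinearMap.proj (R := ℝ) (φ := fun _ : ι => ℝ) b‖ := by
  refine norm_sum_le_of_le _ fun b _ => ?_
  rw [norm_smul, norm_mul]
  refine mul_le_mul_of_nonneg_right ?_ (norm_nonneg _)
  refine (mul_le_of_le_one_right (norm_nonneg _) (abs_gibbs_bondSpin_le_one ep v _ b)).trans ?_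
  have abs_sub_lt : |v b - u b| < 1 := (dist_le_pi_dist v u b).trans_lt hv
  have abs_le : |v b| ≤ |u b| + 1 := by linarith [abs_sub_abs_le_abs_sub (v b) (u b)]
  calc |2 * v b + g b| ≤ 2 * |v b| + |g b| := by
        simpa only [abs_mul, abs_two] using abs_add_le (2 * v b) (g b)
    _ ≤ 2 * (|u b| + 1) + |g b| := by gcongr

theorem integrable_mul_gibbs_add (ep : ι → V × V) (u : ι → ℝ) (b : ι) :
    Integrable (fun g => (2 * u b + g b) * gibbs ep u (u + g) fun S => bondSpin ep S b)
      (couplings 0) := by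
  refine ((integrable_const (2 * u b)).add (integrable_eval_couplings 0 b)).mul_bdd (c := 1)
    ?_ (ae_of_all _ fun g => abs_gibbs_bondSpin_le_one ep u (u + g) b)
  exact ((continuous_gibbs ep u _).comp (continuous_const_add u)).aestronglyMeasurable

theorem hasFDerivAt_pressure (ep : ι → V × V) (u : ι → ℝ) :
    HasFDerivAt (pressure ep)
      (∑ b, (u b * quenched u fun j => gibbs ep u j fun S => bondSpin ep S b + 1) •
        ContinuousLinearMap.proj (R := ℝ) (φ := fun _ => ℝ) b) u := by
  have pressure_eq : pressure ep
      = fun u => ∫ g, Real.log (partitionFn ep u (u + g)) ∂couplings 0 :=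
    funext fun u => quenched_eq_quenched_zero_const_add u _
  have measurable_log (v : ι → ℝ) : AEStronglyMeasurable
      (fun g => Real.log (partitionFn ep v (v + g))) (couplings 0) :=
    ((continuous_log_partitionFn ep v).comp (continuous_const_add v)).aestronglyMeasurable
  have integrable_log : Integrable (fun g => Real.log (partitionFn ep u (u + g))) (couplings 0) :=
    (measurePreserving_const_add_couplings 0 u).integrable_comp_emb
      (measurableEmbedding_addLeft u) |>.2 (integrable_log_partitionFn ep u _)
  have integrable_deriv (b : ι) := (integrable_mul_gibbs_add ep u b).smul_const
    (ContinuousLinearMap.proj (R := ℝ) (φ := fun _ : ι => ℝ) b)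
  have integrable_bound := integrable_finsetSum (μ := couplings 0) Finset.univ fun b _ =>
    ((integrable_const (2 * (|u b| + 1))).add (integrable_eval_couplings 0 b).abs).mul_const
      ‖ContinuousLinearMap.proj (R := ℝ) (φ := fun _ : ι => ℝ) b‖
  have hasFDerivAt_integral := hasFDerivAt_integral_of_dominated_of_fderiv_le
    (Metric.ball_mem_nhds u one_pos) (Eventually.of_forall measurable_log) integrable_log
    (integrable_finsetSum _ fun b _ => integrable_deriv b).aestronglyMeasurable
    (ae_of_all _ fun g v hv => norm_sum_gibbs_smul_proj_le ep g hv) integrable_bound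
    (ae_of_all _ fun g v _ => hasFDerivAt_log_partitionFn_add ep g v)
  rw [pressure_eq]
  refine hasFDerivAt_integral.congr_fderiv ?_
  rw [integral_finsetSum _ fun b _ => integrable_deriv b]
  refine Finset.sum_congr rfl fun b _ => ?_
  rw [integral_smul_const, ← quenched_add_mul_gibbs, quenched_eq_quenched_zero_const_add u]
  simp only [quenched, Pi.add_apply, two_mul, add_assoc]

end Gradient

section Corridor

variable {ι : Type*} [DecidableEq ι]

/-- The interpolating parameters `x_b(t)` along a corridor `C`, with reference values `x_b` allowed
to depend on the bond. -/
def corridorParams (C : Finset ι) (x : ι → ℝ) (t : ℝ) : ι → ℝ :=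
  fun b => if b ∈ C then x b * Real.sqrt t else x b

theorem hasDerivAt_corridorParams (C : Finset ι) (x : ι → ℝ) {t : ℝ} (ht : 0 < t) :
    HasDerivAt (corridorParams C x)
      (fun b => if b ∈ C then x b * (1 / (2 * Real.sqrt t)) else 0) t := by
  refine hasDerivAt_pi.2 fun b => ?_
  by_cases hb : b ∈ C
  · simpa only [corridorParams, if_pos hb] using (Real.hasDerivAt_sqrt ht.ne').const_mul (x b)
  · simpa only [corridorParams, if_neg hb] using hasDerivAt_const t (x b)

theorem corridor_interpolation_derivative_general {V : Type*} [Fintype V] [DecidableEq V]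
    [Fintype ι] (ep : ι → V × V) (C : Finset ι) (x : ι → ℝ) {t : ℝ} (ht : 0 < t) :
    HasDerivAt (fun s => pressure ep (corridorParams C x s))
      (∑ b ∈ C, x b ^ 2 / 2 * quenched (corridorParams C x t)
        (fun j => gibbs ep (corridorParams C x t) j fun S => bondSpin ep S b + 1)) t := by
  refine ((hasFDerivAt_pressure ep (corridorParams C x t)).comp_hasDerivAt t
    (hasDerivAt_corridorParams C x ht)).congr_deriv ?_
  simp only [sum_apply, smul_apply, ContinuousLinearMap.proj_apply, smul_eq_mul, mul_ite,
    mul_zero, Finset.sum_ite_mem, Finset.univ_inter]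
  refine Finset.sum_congr rfl fun b hb => ?_
  have sqrt_ne_zero : Real.sqrt t ≠ 0 := (Real.sqrt_pos.2 ht).ne'
  have params_eq : corridorParams C x t b = x b * Real.sqrt t := if_pos hb
  rw [params_eq]
  field_simp

end Corridor

/-- Interpolation derivative along a corridor: with `x_b(t) = x√t` for
`b ∈ C` and `x_b(t) = x` otherwise, and `P(t)` the quenched pressure at parameters
`{x_b(t)}`, for every `t ∈ (0,1]` one has
`dP(t)/dt = (x²/2) Σ_{b∈C} [⟨S_b + 1⟩_t]_t`. -/
theorem corridor_interpolation_derivative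
    {V ι : Type*} [Fintype V] [DecidableEq V] [Fintype ι] [DecidableEq ι]
    (ep : ι → V × V) (hep : ∀ b, (ep b).1 ≠ (ep b).2)
    (x : ℝ) (hx : 0 < x) (C : Finset ι) (t : ℝ) (ht : t ∈ Set.Ioc (0 : ℝ) 1) :
    HasDerivAt
      (fun s => pressure ep (fun b => if b ∈ C then x * Real.sqrt s else x))
      (x ^ 2 / 2 * ∑ b ∈ C,
        quenched (fun b' => if b' ∈ C then x * Real.sqrt t else x)
          (fun j => gibbs ep (fun b' => if b' ∈ C then x * Real.sqrt t else x) j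
            (fun S => bondSpin ep S b + 1))) t := by
  rw [Finset.mul_sum]
  exact corridor_interpolation_derivative_general ep C (fun _ => x) ht.1

end
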